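/- A lattice distribution F on the nonnegative integers with unbounded support belongs to the class S_lattice(γ̂) if and only if: (i) liminf_{n→∞} F{n−1}/F{n} ≥ e^{γ̂}, and (ii) F*F{n} ~ c F{n} as n → ∞ for some c ∈ (0,∞). Moreover, necessarily c = 2φ(γ̂). -/

import Mathlib

open MeasureTheory Filter Real Set
open scoped ENNReal Topology

noncomputable section

/-- Convolution of two measures on ℝ: distribution of the sum of independent r.v.'s. -/
def mconv (μ ν : MeasureTheory.Measure ℝ) : MeasureTheory.Measure ℝ :=
  MeasureTheory.Measure.map (fun p : ℝ × ℝ => p.1 + p.2) (μ.prod ν)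

/-- The tail F̄(x) = F(x,∞). -/
def tail (F : MeasureTheory.Measure ℝ) (x : ℝ) : ℝ≥0∞ := F (Set.Ioi x)

/-- Laplace transform φ(γ) = ∫ e^{γx} F(dx), with value in [0,∞]. -/
def phi (F : MeasureTheory.Measure ℝ) (γ : ℝ) : ℝ≥0∞ :=
  ∫⁻ x, ENNReal.ofReal (Real.exp (γ * x)) ∂F

/-- F is heavy-tailed: φ(γ) = ∞ for every γ > 0. -/
def IsHeavyTailed (F : MeasureTheory.Measure ℝ) : Prop :=
  ∀ γ : ℝ, 0 < γ → phi F γ = ⊤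

/-- γ̂ = sup{γ : φ(γ) < ∞} ∈ [0,∞] (for distributions on [0,∞)). -/
def gammaHat (F : MeasureTheory.Measure ℝ) : ℝ≥0∞ :=
  sSup {p : ℝ≥0∞ | ∃ γ : ℝ, p = ENNReal.ofReal γ ∧ phi F γ < ⊤}

/-- φ(γ̂) = lim_{γ↑γ̂} φ(γ), realized (by monotonicity of φ) as sup over γ < γ̂. -/
def phiHat (F : MeasureTheory.Measure ℝ) : ℝ≥0∞ :=
  ⨆ (γ : ℝ) (_ : ENNReal.ofReal γ < gammaHat F ∨ γ < 0), phi F γ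

/-- Laplace transform of a lattice mass function. -/
def lphi (p : ℕ → ℝ≥0∞) (γ : ℝ) : ℝ≥0∞ :=
  ∑' n : ℕ, ENNReal.ofReal (Real.exp (γ * n)) * p n

/-- Mass function of the convolution: (F*F){n} = Σ_{k≤n} F{k} F{n−k}. -/
def lconv (p : ℕ → ℝ≥0∞) (n : ℕ) : ℝ≥0∞ :=
  ∑ k ∈ Finset.range (n + 1), p k * p (n - k)

/-- The class S_lattice(γ). -/
def memSlat (p : ℕ → ℝ≥0∞) (γ : ℝ) : Prop :=
  lphi p γ < ⊤ ∧
  Tendsto (fun n : ℕ => p (n + 1) / p n) atTop (𝓝 (ENNReal.ofReal (Real.exp (-γ)))) ∧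
  Tendsto (fun n : ℕ => lconv p n / p n) atTop (𝓝 (2 * lphi p γ))

/-- Real convolution square. -/
def rconv (a : ℕ → ℝ) (n : ℕ) : ℝ := ∑ k ∈ Finset.range (n + 1), a k * a (n - k)

lemma rconv_ge (a : ℕ → ℝ) (ha : ∀ n, 0 ≤ a n) (K n : ℕ) (hn : 2 * K ≤ n) :
    2 * ∑ j ∈ Finset.range K, a j * a (n - j) ≤ rconv a n := by
  unfold rconv
  have e : n + 1 = (n + 1 - K) + K := by omega
  have h1 : ∑ k ∈ Finset.range (n + 1), a k * a (n - k) =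
      ∑ k ∈ Finset.range (n + 1 - K), a k * a (n - k) +
      ∑ x ∈ Finset.range K, a (n + 1 - K + x) * a (n - (n + 1 - K + x)) := by
    conv_lhs => rw [e]
    rw [Finset.sum_range_add]
  have h2 : ∑ x ∈ Finset.range K, a (n + 1 - K + x) * a (n - (n + 1 - K + x)) =
      ∑ j ∈ Finset.range K, a j * a (n - j) := by
    rw [← Finset.sum_range_reflect]
    refine Finset.sum_congr rfl fun j hj => ?_
    have hj := Finset.mem_range.1 hj
    have e1 : n + 1 - K + (K - 1 - j) = n - j := by omega
    have e2 : n - (n - j) = j := by omega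
    rw [e1, e2, mul_comm]
  have h3 : ∑ j ∈ Finset.range K, a j * a (n - j) ≤
      ∑ k ∈ Finset.range (n + 1 - K), a k * a (n - k) := by
    refine Finset.sum_le_sum_of_subset_of_nonneg ?_ fun i _ _ => mul_nonneg (ha _) (ha _)
    intro x hx
    simp only [Finset.mem_range] at *
    omega
  rw [h1, h2]; linarith

lemma ratio_iter (a : ℕ → ℝ)
    (hr : ∀ ε : ℝ, 0 < ε → ε < 1 → ∀ᶠ n in atTop, (1 - ε) * a (n + 1) ≤ a n) (j : ℕ) :
    ∀ ε : ℝ, 0 < ε → ε < 1 → (∀ n, 0 ≤ a n) → ∀ᶠ n in atTop, (1 - ε) * a (n + j) ≤ a n := by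
  induction j with
  | zero =>
    intro ε h0 h1 ha
    refine Eventually.of_forall fun n => ?_
    have := ha n
    simp only [add_zero]
    nlinarith
  | succ j ih =>
    intro ε h0 h1 ha
    have h2 := (tendsto_add_atTop_nat 1).eventually (ih (ε / 2) (by linarith) (by linarith) ha)
    filter_upwards [h2, hr (ε / 2) (by linarith) (by linarith)] with n h3 h4
    have e : n + 1 + j = n + (j + 1) := by ring
    rw [e] at h3
    have := ha (n + (j + 1))
    have h5 : (1 - ε / 2) * ((1 - ε / 2) * a (n + (j + 1))) ≤ (1 - ε / 2) * a (n + 1) :=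
      mul_le_mul_of_nonneg_left h3 (by linarith)
    nlinarith [mul_nonneg (sq_nonneg ε) this]

lemma ratio_sub (a : ℕ → ℝ) (ha : ∀ n, 0 ≤ a n)
    (hr : ∀ ε : ℝ, 0 < ε → ε < 1 → ∀ᶠ n in atTop, (1 - ε) * a (n + 1) ≤ a n)
    (K : ℕ) (ε : ℝ) (h0 : 0 < ε) (h1 : ε < 1) :
    ∀ᶠ n in atTop, ∀ j ∈ Finset.range K, (1 - ε) * a n ≤ a (n - j) := by
  rw [Filter.eventually_all_finset]
  intro j _
  have := (tendsto_sub_atTop_nat j).eventually (ratio_iter a hr j ε h0 h1 ha)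
  filter_upwards [this, eventually_ge_atTop j] with n hn hj
  rwa [Nat.sub_add_cancel hj] at hn

lemma conv_le (a : ℕ → ℝ) (hpos : ∀ᶠ n in atTop, 0 < a n) (c : ℝ)
    (hc : Tendsto (fun n => rconv a n / a n) atTop (𝓝 c)) (ε : ℝ) (h0 : 0 < ε) :
    ∀ᶠ n in atTop, (c - ε) * a n ≤ rconv a n ∧ rconv a n ≤ (c + ε) * a n := by
  filter_upwards [hpos, hc.eventually (Ioo_mem_nhds (show c - ε < c by linarith)
    (show c < c + ε by linarith))] with n hn h
  exact ⟨((lt_div_iff₀ hn).1 h.1).le, ((div_lt_iff₀ hn).1 h.2).le⟩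

lemma core_partial (a : ℕ → ℝ) (ha : ∀ n, 0 ≤ a n) (hpos : ∀ᶠ n in atTop, 0 < a n)
    (hr : ∀ ε : ℝ, 0 < ε → ε < 1 → ∀ᶠ n in atTop, (1 - ε) * a (n + 1) ≤ a n) (c : ℝ)
    (hc : Tendsto (fun n => rconv a n / a n) atTop (𝓝 c)) (K : ℕ) :
    2 * ∑ j ∈ Finset.range K, a j ≤ c := by
  set S := ∑ j ∈ Finset.range K, a j with hS
  have hS0 : 0 ≤ S := Finset.sum_nonneg fun i _ => ha i
  have key : ∀ ε : ℝ, 0 < ε → ε < 1 → 2 * ((1 - ε) * S) ≤ c + ε := by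
    intro ε h0 h1
    obtain ⟨n, hn1, hn2, hn3, hn4⟩ := ((ratio_sub a ha hr K ε h0 h1).and
      ((conv_le a hpos c hc ε h0).and (hpos.and (eventually_ge_atTop (2 * K))))).exists
    have h5 := rconv_ge a ha K n hn4
    have h6 : ((1 - ε) * S) * a n ≤ ∑ j ∈ Finset.range K, a j * a (n - j) := by
      rw [hS, Finset.mul_sum, Finset.sum_mul]
      refine Finset.sum_le_sum fun j hj => ?_
      have := mul_le_mul_of_nonneg_left (hn1 j hj) (ha j)
      linarith
    have h7 := hn2.2
    refine le_of_mul_le_mul_right ?_ hn3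
    linarith
  have t1 : Tendsto (fun ε : ℝ => 2 * ((1 - ε) * S)) (𝓝[>] 0) (𝓝 (2 * ((1 - 0) * S))) :=
    (Continuous.tendsto (by fun_prop) _).mono_left nhdsWithin_le_nhds
  have t2 : Tendsto (fun ε : ℝ => c + ε) (𝓝[>] 0) (𝓝 (c + 0)) :=
    (Continuous.tendsto (by fun_prop) _).mono_left nhdsWithin_le_nhds
  have := le_of_tendsto_of_tendsto t1 t2 (by
    filter_upwards [Ioo_mem_nhdsGT (zero_lt_one : (0:ℝ) < 1)] with ε hε
    exact key ε hε.1 hε.2)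
  linarith

lemma core_ratio_k (a : ℕ → ℝ) (ha : ∀ n, 0 ≤ a n) (hpos : ∀ᶠ n in atTop, 0 < a n)
    (hs : Summable a)
    (hr : ∀ ε : ℝ, 0 < ε → ε < 1 → ∀ᶠ n in atTop, (1 - ε) * a (n + 1) ≤ a n)
    (hc : Tendsto (fun n => rconv a n / a n) atTop (𝓝 (2 * ∑' n, a n))) (k : ℕ)
    (hk : 0 < a k) : Tendsto (fun n => a (n - k) / a n) atTop (𝓝 1) := by
  set Φ := ∑' n, a n with hΦ
  have hΦ0 : 0 ≤ Φ := tsum_nonneg ha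
  -- upper bound for each ε
  have key : ∀ ε : ℝ, 0 < ε → ε < 1 → ∀ᶠ n in atTop,
      (1 - ε) * a n ≤ a (n - k) ∧ a k * a (n - k) ≤ (a k + (2 + Φ) * ε) * a n := by
    intro ε h0 h1
    have hsum := hs.hasSum.tendsto_sum_nat
    obtain ⟨K, hK1, hK2⟩ := ((hsum.eventually (lt_mem_nhds (show Φ - ε < Φ by linarith))).and
      (eventually_gt_atTop k)).exists
    filter_upwards [ratio_sub a ha hr K ε h0 h1, conv_le a hpos _ hc ε h0, hpos,
      eventually_ge_atTop (2 * K)] with n hn1 hn2 hn3 hn4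
    have hkK : k ∈ Finset.range K := Finset.mem_range.2 hK2
    refine ⟨hn1 k hkK, ?_⟩
    have h5 := rconv_ge a ha K n hn4
    rw [← Finset.add_sum_erase _ _ hkK] at h5 hK1
    set T := ∑ x ∈ (Finset.range K).erase k, a x with hT
    have hT0 : 0 ≤ T := Finset.sum_nonneg fun i _ => ha i
    have hTΦ : a k + T ≤ Φ := by
      rw [hT, Finset.add_sum_erase _ _ hkK]
      exact hs.sum_le_tsum _ fun i _ => ha i
    have h6 : ((1 - ε) * T) * a n ≤ ∑ j ∈ (Finset.range K).erase k, a j * a (n - j) := by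
      rw [hT, Finset.mul_sum, Finset.sum_mul]
      refine Finset.sum_le_sum fun j hj => ?_
      have := mul_le_mul_of_nonneg_left (hn1 j (Finset.mem_of_mem_erase hj)) (ha j)
      linarith
    have h7 := hn2.2
    have h8 : a k * a (n - k) ≤ (Φ + ε / 2 - (1 - ε) * T) * a n := by linarith
    refine h8.trans (mul_le_mul_of_nonneg_right ?_ hn3.le)
    have : ε * T ≤ ε * Φ := mul_le_mul_of_nonneg_left (by linarith) h0.le
    linarith
  rw [tendsto_order]
  constructor
  · intro b hb
    have hε0 : 0 < min ((1 - b) / 2) (1/2) := lt_min (by linarith) (by norm_num)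
    have hε1 : min ((1 - b) / 2) (1/2) < 1 := (min_le_right _ _).trans_lt (by norm_num)
    have hε2 : min ((1 - b) / 2) (1/2) ≤ (1 - b) / 2 := min_le_left _ _
    filter_upwards [key _ hε0 hε1, hpos] with n hn hp
    rw [lt_div_iff₀ hp]
    refine lt_of_lt_of_le ?_ hn.1
    exact mul_lt_mul_of_pos_right (by linarith) hp
  · intro b hb
    set e := (b - 1) * a k / (2 * (2 + Φ)) with he
    have he0 : 0 < e := by
      have : 0 < b - 1 := by linarith
      positivity
    have hε0 : 0 < min e (1/2) := lt_min he0 (by norm_num)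
    have hε1 : min e (1/2) < 1 := (min_le_right _ _).trans_lt (by norm_num)
    have hε2 : min e (1/2) ≤ e := min_le_left _ _
    filter_upwards [key _ hε0 hε1, hpos] with n hn hp
    rw [div_lt_iff₀ hp]
    have h9 : (2 + Φ) * e = (b - 1) * a k / 2 := by
      rw [he]; field_simp
    have h10 : (2 + Φ) * min e (1/2) ≤ (2 + Φ) * e :=
      mul_le_mul_of_nonneg_left hε2 (by linarith)
    have h11 : 0 < (b - 1) * a k := mul_pos (by linarith) hk
    refine lt_of_mul_lt_mul_left ?_ hk.le
    refine hn.2.trans_lt ?_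
    rw [← mul_assoc]
    exact mul_lt_mul_of_pos_right (by linarith) hp

lemma core_ratio (a : ℕ → ℝ) (ha : ∀ n, 0 ≤ a n) (hpos : ∀ᶠ n in atTop, 0 < a n)
    (hs : Summable a)
    (hr : ∀ ε : ℝ, 0 < ε → ε < 1 → ∀ᶠ n in atTop, (1 - ε) * a (n + 1) ≤ a n)
    (hc : Tendsto (fun n => rconv a n / a n) atTop (𝓝 (2 * ∑' n, a n))) :
    Tendsto (fun n => a (n + 1) / a n) atTop (𝓝 1) := by
  obtain ⟨k, hk1, hk2⟩ := (hpos.and ((tendsto_add_atTop_nat 1).eventually hpos)).exists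
  have t1 := core_ratio_k a ha hpos hs hr hc k hk1
  have t2 := core_ratio_k a ha hpos hs hr hc (k + 1) hk2
  have t3 := (t1.div t2 one_ne_zero).comp (tendsto_add_atTop_nat (k + 1))
  rw [div_one] at t3
  refine t3.congr' ?_
  filter_upwards [hpos, (tendsto_add_atTop_nat (k + 1)).eventually hpos] with n h1 h2
  have e1 : n + (k + 1) - k = n + 1 := by omega
  have e2 : n + (k + 1) - (k + 1) = n := by omega
  simp only [Function.comp, Pi.div_apply, e1, e2]
  field_simp

lemma core_bound (a : ℕ → ℝ) (ha : ∀ n, 0 ≤ a n) (hpos : ∀ᶠ n in atTop, 0 < a n)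
    (hs : Summable a) (hheavy : ∀ r : ℝ, 1 < r → ¬ Summable (fun n : ℕ => r ^ n * a n))
    (c : ℝ) (δ : ℝ) (hδ : 0 < δ) (hδc : δ < c) (N : ℕ)
    (hN : ∀ n, N ≤ n → (c - δ) * a n ≤ rconv a n) (r : ℝ) (hr : 1 < r) :
    (c - δ) * (δ - (r ^ N - 1) * ∑' n, a n) ≤ δ * (2 * ∑' n, a n + δ) := by
  set Φ := ∑' n, a n with hΦ
  have hΦ0 : 0 ≤ Φ := tsum_nonneg ha
  have hsu : ∀ u : ℝ, 1 ≤ u → Summable (fun n : ℕ => min (r ^ n) u * a n) := fun u hu =>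
    Summable.of_nonneg_of_le (fun n => mul_nonneg (le_min (by positivity) (by linarith)) (ha n))
      (fun n => mul_le_mul_of_nonneg_right (min_le_right _ _) (ha n)) (hs.mul_left u)
  set A : ℝ → ℝ := fun u => ∑' n : ℕ, min (r ^ n) u * a n with hA
  have hrn : ∀ n : ℕ, 1 ≤ r ^ n := fun n => one_le_pow₀ hr.le
  have hA1 : A 1 = Φ := by
    simp only [hA, hΦ]
    refine tsum_congr fun n => ?_
    rw [min_eq_right (hrn n), one_mul]
  have hlip : ∀ u ∈ Ici (1:ℝ), ∀ v ∈ Ici (1:ℝ), A u ≤ A v + Φ * |u - v| := by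
    intro u hu v hv
    have e : A v + Φ * |u - v| = ∑' n : ℕ, (min (r ^ n) v * a n + a n * |u - v|) := by
      rw [(hsu v hv).tsum_add (hs.mul_right _), tsum_mul_right]
    rw [e]
    refine (hsu u hu).tsum_le_tsum (fun n => ?_) ((hsu v hv).add (hs.mul_right _))
    have : min (r ^ n) u ≤ min (r ^ n) v + |u - v| := by
      have h1 := le_abs_self (u - v)
      have h2 := abs_nonneg (u - v)
      rcases le_total (r ^ n) v with h | h
      · rw [min_eq_left h]; linarith [min_le_left (r ^ n) u]
      · rw [min_eq_right h]; linarith [min_le_right (r ^ n) u]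
    nlinarith [mul_le_mul_of_nonneg_right this (ha n)]
  have hcont : ContinuousOn A (Ici 1) := by
    have : LipschitzOnWith (Real.toNNReal Φ) A (Ici 1) := by
      refine LipschitzOnWith.of_dist_le_mul fun u hu v hv => ?_
      rw [Real.coe_toNNReal _ hΦ0, Real.dist_eq, Real.dist_eq, abs_le]
      have h1 := hlip u hu v hv
      have h2 := hlip v hv u hu
      rw [abs_sub_comm v u] at h2
      constructor <;> linarith
    exact this.continuousOn
  obtain ⟨M, hM⟩ : ∃ M : ℕ, Φ + δ ≤ ∑ n ∈ Finset.range M, r ^ n * a n := by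
    have h := (not_summable_iff_tendsto_nat_atTop_of_nonneg
      (fun n => mul_nonneg (by linarith [hrn n]) (ha n))).1 (hheavy r hr)
    exact (h.eventually_ge_atTop _).exists
  have hAM : Φ + δ ≤ A (r ^ M) := by
    refine hM.trans ?_
    refine le_trans (le_of_eq ?_) ((hsu _ (hrn M)).sum_le_tsum (Finset.range M)
      fun i _ => mul_nonneg (le_min (by positivity) (by positivity)) (ha i))
    refine Finset.sum_congr rfl fun i hi => ?_
    rw [min_eq_left (pow_le_pow_right₀ hr.le (Finset.mem_range.1 hi).le)]
  obtain ⟨u, hu, hAu⟩ : ∃ u ∈ Icc 1 (r ^ M), A u = Φ + δ :=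
    intermediate_value_Icc (hrn M) (hcont.mono Icc_subset_Ici_self)
      ⟨by rw [hA1]; linarith, hAM⟩
  have hu1 : 1 ≤ u := hu.1
  set f : ℕ → ℝ := fun n => min (r ^ n) u with hf
  have hf1 : ∀ n, 1 ≤ f n := fun n => le_min (hrn n) hu1
  have hsub : ∀ m n, f (m + n) ≤ f m * f n := by
    intro m n
    simp only [hf]
    rcases le_total (r ^ m) u with h | h
    · rcases le_total (r ^ n) u with h' | h'
      · rw [min_eq_left h, min_eq_left h', ← pow_add]; exact min_le_left _ _
      · rw [min_eq_left h, min_eq_right h']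
        refine (min_le_right _ _).trans ?_
        nlinarith [hrn m]
    · rw [min_eq_right h]
      refine (min_le_right _ _).trans ?_
      have : 1 ≤ min (r ^ n) u := hf1 n
      nlinarith
  have hfa : Summable (fun n => f n * a n) := hsu u hu1
  have hfa0 : ∀ n, 0 ≤ f n * a n := fun n => mul_nonneg (by linarith [hf1 n]) (ha n)
  -- convolution sums
  have c1 := tsum_mul_tsum_eq_tsum_sum_range_of_summable_norm hs.norm hs.norm
  have c2 := tsum_mul_tsum_eq_tsum_sum_range_of_summable_norm hfa.norm hfa.norm
  have s1 : Summable (fun n => rconv a n) :=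
    (summable_norm_sum_mul_range_of_summable_norm hs.norm hs.norm).of_norm
  have s2 : Summable (fun n => rconv (fun n => f n * a n) n) :=
    (summable_norm_sum_mul_range_of_summable_norm hfa.norm hfa.norm).of_norm
  have c1' : Φ * Φ = ∑' n, rconv a n := c1
  have c2' : (Φ + δ) * (Φ + δ) = ∑' n, rconv (fun n => f n * a n) n := by
    rw [← hAu]; exact c2
  have hrc0 : ∀ n, 0 ≤ rconv a n := fun n =>
    Finset.sum_nonneg fun k _ => mul_nonneg (ha _) (ha _)
  have hcmp : ∀ n, f n * rconv a n ≤ rconv (fun n => f n * a n) n := by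
    intro n
    unfold rconv
    rw [Finset.mul_sum]
    refine Finset.sum_le_sum fun k hk => ?_
    have hk' : k + (n - k) = n := by have := Finset.mem_range.1 hk; omega
    have := hsub k (n - k)
    rw [hk'] at this
    have h2 := mul_le_mul_of_nonneg_right this (mul_nonneg (ha k) (ha (n - k)))
    calc _ ≤ _ := h2
      _ = _ := by ring
  -- termwise
  have term : ∀ n, (c - δ) * ((f n * a n - a n) - (r ^ N - 1) * a n) ≤
      rconv (fun n => f n * a n) n - rconv a n := by
    intro n
    have hd : (f n - 1) * rconv a n ≤ rconv (fun n => f n * a n) n - rconv a n := by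
      linarith [hcmp n]
    refine le_trans ?_ hd
    rcases le_total N n with h | h
    · have h1 := mul_le_mul_of_nonneg_left (hN n h) (show 0 ≤ f n - 1 by linarith [hf1 n])
      have h2 : 0 ≤ (c - δ) * ((r ^ N - 1) * a n) :=
        mul_nonneg (by linarith) (mul_nonneg (by linarith [hrn N]) (ha n))
      linarith
    · have h1 : 0 ≤ (f n - 1) * rconv a n :=
        mul_nonneg (by linarith [hf1 n]) (hrc0 n)
      refine le_trans ?_ h1
      have h3 : f n ≤ r ^ N := (min_le_left _ _).trans (pow_le_pow_right₀ hr.le h)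
      have h4 := mul_le_mul_of_nonneg_right h3 (ha n)
      refine mul_nonpos_of_nonneg_of_nonpos (by linarith) (by linarith)
  have fin := Summable.tsum_le_tsum term
    (((hfa.sub hs).sub (hs.mul_left _)).mul_left _) (s2.sub s1)
  rw [tsum_mul_left, (hfa.sub hs).tsum_sub (hs.mul_left _), hfa.tsum_sub hs, tsum_mul_left,
    s2.tsum_sub s1, ← c1', ← c2'] at fin
  have e : ∑' n, f n * a n = Φ + δ := hAu
  rw [e, ← hΦ] at fin
  calc _ = (c - δ) * (Φ + δ - Φ - (r ^ N - 1) * Φ) := by ring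
    _ ≤ _ := fin
    _ = _ := by ring

lemma core_le (a : ℕ → ℝ) (ha : ∀ n, 0 ≤ a n) (hpos : ∀ᶠ n in atTop, 0 < a n)
    (hs : Summable a) (hheavy : ∀ r : ℝ, 1 < r → ¬ Summable (fun n : ℕ => r ^ n * a n))
    (c : ℝ) (hc0 : 0 < c) (hc : Tendsto (fun n => rconv a n / a n) atTop (𝓝 c)) :
    c ≤ 2 * ∑' n, a n := by
  have key : ∀ δ : ℝ, 0 < δ → δ < c → c - δ ≤ 2 * ∑' n, a n + δ := by
    intro δ h0 h1
    obtain ⟨N, hN⟩ := eventually_atTop.1 (conv_le a hpos c hc δ h0)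
    have t1 : Tendsto (fun r : ℝ => (c - δ) * (δ - (r ^ N - 1) * ∑' n, a n)) (𝓝[>] 1)
        (𝓝 ((c - δ) * (δ - (1 ^ N - 1) * ∑' n, a n))) :=
      (Continuous.tendsto (by fun_prop) _).mono_left nhdsWithin_le_nhds
    have := le_of_tendsto t1 (by
      filter_upwards [self_mem_nhdsWithin] with r hr
      exact core_bound a ha hpos hs hheavy c δ h0 h1 N (fun n hn => (hN n hn).1) r hr)
    rw [one_pow, sub_self, zero_mul, sub_zero, mul_comm] at this
    exact le_of_mul_le_mul_left this h0
  by_contra! h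
  have hΦ0 : 0 ≤ ∑' n, a n := tsum_nonneg ha
  have := key ((c - 2 * ∑' n, a n) / 3) (by linarith) (by linarith)
  linarith

lemma tilt_facts (p : ℕ → ℝ≥0∞) (hfin : ∀ n, p n ≠ ⊤) (γ : ℝ) :
    ∀ n : ℕ, ENNReal.ofReal (Real.exp (γ * n)) * p n =
      ENNReal.ofReal (Real.exp (γ * n) * (p n).toReal) := by
  intro n
  rw [ENNReal.ofReal_mul (Real.exp_pos _).le, ENNReal.ofReal_toReal (hfin n)]

lemma lphi_eq (p : ℕ → ℝ≥0∞) (hfin : ∀ n, p n ≠ ⊤) (γ : ℝ)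
    (hs : Summable fun n : ℕ => Real.exp (γ * n) * (p n).toReal) :
    lphi p γ = ENNReal.ofReal (∑' n : ℕ, Real.exp (γ * n) * (p n).toReal) := by
  unfold lphi
  rw [ENNReal.ofReal_tsum_of_nonneg (fun n => by positivity) hs]
  exact tsum_congr (tilt_facts p hfin γ)

lemma rconv_tilt (p : ℕ → ℝ≥0∞) (hfin : ∀ n, p n ≠ ⊤) (γ : ℝ) (n : ℕ) :
    rconv (fun n : ℕ => Real.exp (γ * n) * (p n).toReal) n =
      Real.exp (γ * n) * (lconv p n).toReal := by
  unfold rconv lconv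
  rw [ENNReal.toReal_sum (fun k _ => ENNReal.mul_ne_top (hfin _) (hfin _)), Finset.mul_sum]
  refine Finset.sum_congr rfl fun k hk => ?_
  have hk' : k ≤ n := by have := Finset.mem_range.1 hk; omega
  rw [ENNReal.toReal_mul]
  have : Real.exp (γ * n) = Real.exp (γ * k) * Real.exp (γ * (n - k : ℕ)) := by
    rw [← Real.exp_add, Nat.cast_sub hk']; congr 1; ring
  rw [this]; ring

lemma backward (p : ℕ → ℝ≥0∞) (hpsum : ∑' n, p n = 1)
    (γhat : ℝ) (hγ0 : 0 ≤ γhat)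
    (hγhat : ENNReal.ofReal γhat =
      sSup {q : ℝ≥0∞ | ∃ γ : ℝ, q = ENNReal.ofReal γ ∧ lphi p γ < ⊤})
    (c : ℝ) (hc0 : 0 < c)
    (hl : ENNReal.ofReal (Real.exp γhat) ≤ liminf (fun n : ℕ => p n / p (n + 1)) atTop)
    (hc : Tendsto (fun n : ℕ => lconv p n / p n) atTop (𝓝 (ENNReal.ofReal c))) :
    lphi p γhat < ⊤ ∧
    Tendsto (fun n : ℕ => p (n + 1) / p n) atTop (𝓝 (ENNReal.ofReal (Real.exp (-γhat)))) ∧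
    ENNReal.ofReal c = 2 * lphi p γhat := by
  have hfin : ∀ n, p n ≠ ⊤ := fun n =>
    ((ENNReal.le_tsum n).trans_lt (by rw [hpsum]; exact ENNReal.one_lt_top)).ne
  have hev : ∀ ε : ℝ, 0 < ε → ε < 1 → ∀ᶠ n in atTop,
      ENNReal.ofReal (Real.exp γhat * (1 - ε)) < p n / p (n + 1) := by
    intro ε h0 h1
    refine eventually_lt_of_lt_liminf (lt_of_lt_of_le ?_ hl)
    rw [ENNReal.ofReal_lt_ofReal_iff (Real.exp_pos _)]
    nlinarith [Real.exp_pos γhat]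
  have hp0 : ∀ᶠ n in atTop, p n ≠ 0 := by
    filter_upwards [hev (1/2) (by norm_num) (by norm_num)] with n hn h
    rw [h, ENNReal.zero_div] at hn
    exact not_lt_bot hn
  set a : ℕ → ℝ := fun n : ℕ => Real.exp (γhat * n) * (p n).toReal with ha_def
  have ha : ∀ n, 0 ≤ a n := fun n => by positivity
  have hpos : ∀ᶠ n in atTop, 0 < a n := by
    filter_upwards [hp0] with n hn
    exact mul_pos (Real.exp_pos _) (ENNReal.toReal_pos hn (hfin n))
  have hexp : ∀ n : ℕ, Real.exp (γhat * (n + 1 : ℕ)) = Real.exp (γhat * n) * Real.exp γhat := by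
    intro n; rw [← Real.exp_add]; congr 1; push_cast; ring
  have hr : ∀ ε : ℝ, 0 < ε → ε < 1 → ∀ᶠ n in atTop, (1 - ε) * a (n + 1) ≤ a n := by
    intro ε h0 h1
    filter_upwards [hev ε h0 h1, (tendsto_add_atTop_nat 1).eventually hp0] with n hn h2
    have h3 := (ENNReal.le_div_iff_mul_le (Or.inl h2) (Or.inl (hfin _))).1 hn.le
    have h4 := ENNReal.toReal_mono (hfin n) h3
    have hnn : 0 ≤ Real.exp γhat * (1 - ε) := mul_nonneg (Real.exp_pos _).le (by linarith)
    rw [ENNReal.toReal_mul, ENNReal.toReal_ofReal hnn] at h4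
    have h5 := mul_le_mul_of_nonneg_left h4 (Real.exp_pos (γhat * n)).le
    simp only [ha_def, hexp]
    linarith
  have hc' : Tendsto (fun n => rconv a n / a n) atTop (𝓝 c) := by
    have := (ENNReal.tendsto_toReal ENNReal.ofReal_ne_top).comp hc
    rw [ENNReal.toReal_ofReal hc0.le] at this
    refine this.congr fun n => ?_
    simp only [Function.comp, ENNReal.toReal_div]
    rw [ha_def, rconv_tilt p hfin]
    rw [mul_div_mul_left _ _ (Real.exp_pos _).ne']
  have hpart := core_partial a ha hpos hr c hc'
  have hs : Summable a := summable_of_sum_range_le ha (c := c / 2) fun n => by linarith [hpart n]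
  have hheavy : ∀ r : ℝ, 1 < r → ¬ Summable (fun n : ℕ => r ^ n * a n) := by
    intro r hr1 hsum
    have hlog := Real.log_pos hr1
    have e : (fun n : ℕ => r ^ n * a n) =
        fun n : ℕ => Real.exp ((γhat + Real.log r) * n) * (p n).toReal := by
      funext n
      simp only [ha_def]
      rw [← mul_assoc, add_mul, Real.exp_add, mul_comm (Real.log r), Real.exp_nat_mul,
        Real.exp_log (by linarith)]
      ring
    rw [e] at hsum
    have h1 : lphi p (γhat + Real.log r) < ⊤ := by
      rw [lphi_eq p hfin _ hsum]; exact ENNReal.ofReal_lt_top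
    have h2 : ENNReal.ofReal (γhat + Real.log r) ≤ ENNReal.ofReal γhat := by
      rw [hγhat]; exact le_sSup ⟨_, rfl, h1⟩
    rw [ENNReal.ofReal_le_ofReal_iff hγ0] at h2
    linarith
  have hle := core_le a ha hpos hs hheavy c hc0 hc'
  have hge : ∑' n, a n ≤ c / 2 :=
    Real.tsum_le_of_sum_range_le ha fun n => by linarith [hpart n]
  have hceq : c = 2 * ∑' n, a n := by linarith
  have hphi := lphi_eq p hfin γhat hs
  refine ⟨by rw [hphi]; exact ENNReal.ofReal_lt_top, ?_, ?_⟩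
  · have t := core_ratio a ha hpos hs hr (hceq ▸ hc')
    have t2 := ENNReal.tendsto_ofReal (t.mul_const (Real.exp (-γhat)))
    rw [one_mul] at t2
    refine t2.congr' ?_
    filter_upwards [hp0] with n hn
    rw [← ENNReal.ofReal_toReal (ENNReal.div_ne_top (hfin (n + 1)) hn), ENNReal.toReal_div]
    congr 1
    simp only [ha_def, hexp]
    have h1 := ENNReal.toReal_pos hn (hfin n)
    have h2 := Real.exp_pos (γhat * n)
    rw [Real.exp_neg]
    field_simp
  · rw [hphi, hceq, ENNReal.ofReal_mul (by norm_num)]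
    norm_num [ha_def]

lemma forward (p : ℕ → ℝ≥0∞) (hpsum : ∑' n, p n = 1) (γhat : ℝ) (h : memSlat p γhat) :
    ENNReal.ofReal (Real.exp γhat) ≤ liminf (fun n : ℕ => p n / p (n + 1)) atTop ∧
        ∃ c : ℝ, 0 < c ∧
          Tendsto (fun n : ℕ => lconv p n / p n) atTop (𝓝 (ENNReal.ofReal c)) := by
  have hfin : ∀ n, p n ≠ ⊤ := fun n =>
    ((ENNReal.le_tsum n).trans_lt (by rw [hpsum]; exact ENNReal.one_lt_top)).ne
  obtain ⟨h1, h2, h3⟩ := h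
  constructor
  · have hne : ∀ᶠ n in atTop, p (n + 1) ≠ 0 := by
      filter_upwards [h2.eventually (lt_mem_nhds
        (show 0 < ENNReal.ofReal (Real.exp (-γhat)) from
          ENNReal.ofReal_pos.2 (Real.exp_pos _)))] with n hn h
      rw [h, ENNReal.zero_div] at hn
      exact lt_irrefl _ hn
    have t := (tendsto_inv_iff.2 h2)
    have e : (ENNReal.ofReal (Real.exp (-γhat)))⁻¹ = ENNReal.ofReal (Real.exp γhat) := by
      rw [← ENNReal.ofReal_inv_of_pos (Real.exp_pos _), Real.exp_neg, inv_inv]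
    rw [e] at t
    have t2 : Tendsto (fun n : ℕ => p n / p (n + 1)) atTop (𝓝 (ENNReal.ofReal (Real.exp γhat))) := by
      refine t.congr' ?_
      filter_upwards [hne] with n hn
      exact ENNReal.inv_div (Or.inr (hfin _)) (Or.inr hn)
    exact t2.liminf_eq.ge
  · have hpos : lphi p γhat ≠ 0 := by
      intro h0
      have h0' := ENNReal.tsum_eq_zero.1 h0
      have : ∀ n, p n = 0 := by
        intro n
        rcases mul_eq_zero.1 (h0' n) with h | h
        · exact absurd h (ENNReal.ofReal_pos.2 (Real.exp_pos _)).ne'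
        · exact h
      simp [this] at hpsum
    have hfin2 : 2 * lphi p γhat ≠ ⊤ := ENNReal.mul_ne_top (by norm_num) h1.ne
    refine ⟨(2 * lphi p γhat).toReal, ENNReal.toReal_pos (mul_ne_zero (by norm_num) hpos) hfin2, ?_⟩
    rw [ENNReal.ofReal_toReal hfin2]; exact h3

/-- Theorem 8: F ∈ S_lattice(γ̂) iff liminf F{n−1}/F{n} ≥ e^{γ̂} and
F*F{n} ~ cF{n} for some c ∈ (0,∞); moreover necessarily c = 2φ(γ̂). -/
theorem stmt15 (p : ℕ → ℝ≥0∞) (hpsum : ∑' n, p n = 1)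
    (hub : ∀ n : ℕ, ∃ m : ℕ, n ≤ m ∧ p m ≠ 0)
    (γhat : ℝ) (hγ0 : 0 ≤ γhat)
    (hγhat : ENNReal.ofReal γhat =
      sSup {q : ℝ≥0∞ | ∃ γ : ℝ, q = ENNReal.ofReal γ ∧ lphi p γ < ⊤}) :
    (memSlat p γhat ↔
      (ENNReal.ofReal (Real.exp γhat) ≤
          liminf (fun n : ℕ => p n / p (n + 1)) atTop ∧
        ∃ c : ℝ, 0 < c ∧
          Tendsto (fun n : ℕ => lconv p n / p n) atTop (𝓝 (ENNReal.ofReal c)))) ∧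
    (∀ c : ℝ, 0 < c →
      ENNReal.ofReal (Real.exp γhat) ≤ liminf (fun n : ℕ => p n / p (n + 1)) atTop →
      Tendsto (fun n : ℕ => lconv p n / p n) atTop (𝓝 (ENNReal.ofReal c)) →
      ENNReal.ofReal c = 2 * lphi p γhat) := by
  refine ⟨⟨forward p hpsum γhat, ?_⟩, ?_⟩
  · rintro ⟨hl, c, hc0, hc⟩
    obtain ⟨h1, h2, h3⟩ := backward p hpsum γhat hγ0 hγhat c hc0 hl hc
    exact ⟨h1, h2, h3 ▸ hc⟩
  · intro c hc0 hl hc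
    exact (backward p hpsum γhat hγ0 hγhat c hc0 hl hc).2.2
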